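/- arXiv:math/0212267 — 4 statements merged into one kernel-verified Lean document; each statement's English description precedes it below -/
import Mathlib

section
/- For every odd integer n ≥ 3, the number of involutions of {1,2,…,n} with exactly 3 fixed points that contain the pattern 123 exactly once equals (3/n)·C(n, (n-3)/2), i.e. n·i_n^3(∅;123) = 3·C(n, (n-3)/2); moreover this number equals C_{(n+1)/2} − C_{(n-1)/2}, where C_m denotes the m-th Catalan number. -/
/-- The number of fixed points of a permutation of `Fin n`. -/
def fixedPts {n : ℕ} (π : Equiv.Perm (Fin n)) : ℕ :=
  (Finset.univ.filter fun i => π i = i).card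

/-- A permutation is an involution if it is its own inverse. -/
def IsInvolution {n : ℕ} (π : Equiv.Perm (Fin n)) : Prop :=
  ∀ i, π (π i) = i

/-- The number of occurrences of the pattern 123 in a permutation of `Fin n`. -/
noncomputable def occ123 {n : ℕ} (π : Equiv.Perm (Fin n)) : ℕ :=
  Nat.card {t : Fin n × Fin n × Fin n //
    t.1 < t.2.1 ∧ t.2.1 < t.2.2 ∧ (π t.1 < π t.2.1 ∧ π t.2.1 < π t.2.2)}

/-- `i_n^k(∅;123)`: the number of involutions of `{1, …, n}` with exactly `k` fixed
points containing the pattern 123 exactly once. -/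
noncomputable def iCountOnce123 (n k : ℕ) : ℕ :=
  Nat.card {π : Equiv.Perm (Fin n) // IsInvolution π ∧ occ123 π = 1 ∧ fixedPts π = k}

/-!
The three fixed points `a < b < c` of the involution `π` form an occurrence of 123, hence the only
one. Every `i < b` other than `a` satisfies `b < π i`, since otherwise `i, b, c` would be a second
occurrence; symmetrically `π i < b` for every `i > b` other than `c`. Hence `π` exchanges the two
sides of `b` up to `a` and `c`, and `b` is the midpoint `m` of the `n = 2m + 1` points. The lower
right quadrant of the graph of `π`, with its left column filled by `a` and its top row by `c`, is
the graph of a permutation `τ` of `m + 1` points with `τ 0 ≠ m`, and `τ` avoids 123. Conversely `π`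
is recovered by reflecting `τ` in the diagonal.

Permutations avoiding 123 are counted by a ballot recursion on their first value; there are
`catalan (m + 1)` of them on `m + 1` points, and `catalan m` of these have `τ 0 = m`.
-/

theorem perm_ext_of_forall_ne {α : Type*} {τ ρ : Equiv.Perm α} (a : α)
    (h : ∀ x, x ≠ a → τ x = ρ x) : τ = ρ := by
  obtain ⟨y, hy⟩ := ρ.surjective (τ a)
  have hya : y = a := by
    by_contra hne
    exact hne (τ.injective ((h y hne).trans hy))
  subst hya
  ext x
  by_cases hx : x = y
  · rw [hx, hy]
  · rw [h x hx]

section PatternOccurrences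

/-- The entries of `f` in positions `i`, `j`, `k` form an occurrence of the pattern 123. -/
def IsOcc123 {α β : Type*} [LT α] [LT β] (f : α → β) (i j k : α) : Prop :=
  i < j ∧ j < k ∧ f i < f j ∧ f j < f k

/-- Avoidance of the pattern 123. -/
def Avoids123 {α β : Type*} [LT α] [LT β] (f : α → β) : Prop :=
  ∀ i j k, ¬ IsOcc123 f i j k

theorem IsOcc123.map_of_involutive {α : Type*} [LT α] {f : α → α} (hf : Function.Involutive f)
    {i j k : α} (h : IsOcc123 f i j k) : IsOcc123 f (f i) (f j) (f k) := by
  obtain ⟨hij, hjk, hfij, hfjk⟩ := h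
  exact ⟨hfij, hfjk, by rwa [hf, hf], by rwa [hf, hf]⟩

theorem occ123_eq_one_iff {n : ℕ} {π : Equiv.Perm (Fin n)} {a b c : Fin n}
    (h : IsOcc123 π a b c) :
    occ123 π = 1 ↔ ∀ i j k, IsOcc123 π i j k → i = a ∧ j = b ∧ k = c := by
  unfold occ123
  rw [Nat.card_eq_one_iff_unique]
  constructor
  · rintro ⟨⟨hsub⟩, -⟩ i j k hijk
    simpa using congrArg Subtype.val (hsub ⟨(i, j, k), hijk⟩ ⟨(a, b, c), h⟩)
  · refine fun hunique => ⟨⟨?_⟩, ⟨⟨(a, b, c), h⟩⟩⟩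
    rintro ⟨⟨i, j, k⟩, hijk⟩ ⟨⟨i', j', k'⟩, hijk'⟩
    obtain ⟨rfl, rfl, rfl⟩ := hunique i j k hijk
    obtain ⟨rfl, rfl, rfl⟩ := hunique i' j' k' hijk'
    rfl

end PatternOccurrences

section BallotNumbers

/-- The permutation with first value `x` whose remaining values are ordered like those of `σ`. -/
def consPerm {n : ℕ} (x : Fin (n + 1)) (σ : Equiv.Perm (Fin n)) : Equiv.Perm (Fin (n + 1)) :=
  Equiv.Perm.decomposeFin.symm (0, σ) |>.trans x.cycleRange.symm

@[simp]
theorem consPerm_zero {n : ℕ} (x : Fin (n + 1)) (σ : Equiv.Perm (Fin n)) :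
    consPerm x σ 0 = x := by
  simp [consPerm]

@[simp]
theorem consPerm_succ {n : ℕ} (x : Fin (n + 1)) (σ : Equiv.Perm (Fin n)) (i : Fin n) :
    consPerm x σ i.succ = x.succAbove (σ i) := by
  simp [consPerm]

theorem consPerm_bijective (n : ℕ) :
    Function.Bijective fun p : Fin (n + 1) × Equiv.Perm (Fin n) => consPerm p.1 p.2 := by
  rw [Fintype.bijective_iff_injective_and_card]
  refine ⟨?_, by simp [Fintype.card_perm, Nat.factorial_succ]⟩
  rintro ⟨x, σ⟩ ⟨y, ρ⟩ (h : consPerm x σ = consPerm y ρ)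
  obtain rfl : x = y := by simpa using DFunLike.congr_fun h 0
  have hσ : σ = ρ := Equiv.ext fun i => by simpa using DFunLike.congr_fun h i.succ
  rw [hσ]

theorem card_perm_succ_eq_sum (n : ℕ) (P : Equiv.Perm (Fin (n + 1)) → Prop) :
    Nat.card {π // P π} = ∑ x, Nat.card {σ // P (consPerm x σ)} := by
  rw [← Nat.card_sigma]
  exact Nat.card_congr <| Equiv.symm <|
    (Equiv.subtypeProdEquivSigmaSubtype fun x σ => P (consPerm x σ)).symm.trans <|
      (Equiv.ofBijective _ (consPerm_bijective n)).subtypeEquiv fun _ => Iff.rfl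

/-- Every occurrence of the pattern 12 in `π` starts with a value below `t`. This is the condition
on the remaining entries when `t` is prepended to a permutation avoiding 123. -/
def NoninversionsBelow {n : ℕ} (t : ℕ) (π : Equiv.Perm (Fin n)) : Prop :=
  ∀ i j, i < j → π i < π j → (π i : ℕ) < t

theorem NoninversionsBelow.mono {n s t : ℕ} {π : Equiv.Perm (Fin n)}
    (h : NoninversionsBelow s π) (hst : s ≤ t) : NoninversionsBelow t π :=
  fun i j hij hπ => (h i j hij hπ).trans_le hst

theorem noninversionsBelow_of_le_succ {n t : ℕ} (π : Equiv.Perm (Fin n)) (h : n ≤ t + 1) :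
    NoninversionsBelow t π :=
  fun i j _ hπ => by have := (π j).isLt; rw [Fin.lt_def] at hπ; omega

theorem avoids123_consPerm {n : ℕ} (x : Fin (n + 1)) (σ : Equiv.Perm (Fin n)) :
    Avoids123 (consPerm x σ) ↔ Avoids123 σ ∧ NoninversionsBelow x σ := by
  simp only [Avoids123, IsOcc123, NoninversionsBelow, Fin.forall_fin_succ, consPerm_zero,
    consPerm_succ, Fin.succAbove_lt_succAbove_iff, Fin.succ_lt_succ_iff, Fin.succ_pos,
    Fin.not_lt_zero, Fin.lt_succAbove_iff_le_castSucc,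
    Fin.le_def, Fin.val_castSucc]
  grind

theorem noninversionsBelow_consPerm_last {n t : ℕ} (σ : Equiv.Perm (Fin n)) :
    NoninversionsBelow t (consPerm (Fin.last n) σ) ↔ NoninversionsBelow t σ := by
  simp [NoninversionsBelow, Fin.forall_fin_succ, Fin.le_last]

theorem noninversionsBelow_consPerm_castSucc {n t : ℕ} (y : Fin n) (σ : Equiv.Perm (Fin n))
    (h : NoninversionsBelow y σ) :
    NoninversionsBelow t (consPerm y.castSucc σ) ↔ (y : ℕ) < t := by
  constructor
  · intro ht
    obtain ⟨i, hi⟩ := σ.surjective y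
    simpa using ht 0 i.succ i.succ_pos (by simp [hi])
  · intro hyt i j hij hπ
    cases j using Fin.cases with
    | zero => exact absurd hij (Fin.not_lt_zero i)
    | succ j =>
      cases i using Fin.cases with
      | zero => simpa using hyt
      | succ i =>
        have hlt : σ i < y := h i j (by simpa using hij) (by simpa using hπ)
        rw [consPerm_succ, Fin.succAbove_of_castSucc_lt _ _ (by simpa using hlt)]
        exact lt_trans hlt hyt

/-- The ballot numbers, as the number of ways to continue a permutation avoiding 123 after its
first value `t`. -/
noncomputable def ballot (n t : ℕ) : ℕ :=
  Nat.card {π : Equiv.Perm (Fin n) // Avoids123 π ∧ NoninversionsBelow t π}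

theorem ballot_of_le_succ {n t : ℕ} (h : n ≤ t + 1) :
    ballot n t = Nat.card {π : Equiv.Perm (Fin n) // Avoids123 π} :=
  Nat.card_congr <| Equiv.subtypeEquivRight fun π =>
    and_iff_left (noninversionsBelow_of_le_succ π h)

theorem ballot_succ_self (n : ℕ) : ballot (n + 1) (n + 1) = ballot (n + 1) n := by
  rw [ballot_of_le_succ (Nat.le_succ _), ballot_of_le_succ le_rfl]

theorem ballot_succ {n t : ℕ} (ht : t ≤ n) :
    ballot (n + 1) t = ∑ x ∈ Finset.range (t + 1), ballot n x := by
  have hcast (y : Fin n) : Nat.card {σ : Equiv.Perm (Fin n) //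
        Avoids123 (consPerm y.castSucc σ) ∧ NoninversionsBelow t (consPerm y.castSucc σ)} =
      if (y : ℕ) < t then ballot n y else 0 := by
    have hiff (σ : Equiv.Perm (Fin n)) : Avoids123 (consPerm y.castSucc σ) ∧
          NoninversionsBelow t (consPerm y.castSucc σ) ↔
        (Avoids123 σ ∧ NoninversionsBelow y σ) ∧ (y : ℕ) < t := by
      rw [avoids123_consPerm]
      exact and_congr_right fun h => noninversionsBelow_consPerm_castSucc y σ h.2
    rw [Nat.card_congr (Equiv.subtypeEquivRight hiff)]
    split_ifs with hyt <;> simp [hyt, ballot]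
  have hlast : Nat.card {σ : Equiv.Perm (Fin n) //
      Avoids123 (consPerm (Fin.last n) σ) ∧ NoninversionsBelow t (consPerm (Fin.last n) σ)} =
      ballot n t := by
    refine Nat.card_congr <| Equiv.subtypeEquivRight fun σ => ?_
    rw [avoids123_consPerm, noninversionsBelow_consPerm_last]
    exact and_congr_left fun h => and_iff_left (h.mono ht)
  rw [ballot, card_perm_succ_eq_sum, Fin.sum_univ_castSucc, hlast, Finset.sum_range_succ]
  have hfilter : (Finset.range n).filter (· < t) = Finset.range t := by grind
  rw [Finset.sum_congr rfl fun y _ => hcast y,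
    Fin.sum_univ_eq_sum_range (fun y => if y < t then ballot n y else 0), ← Finset.sum_filter,
    hfilter]

theorem ballot_succ_succ {n t : ℕ} (ht : t < n) :
    ballot (n + 1) (t + 1) = ballot (n + 1) t + ballot n (t + 1) := by
  rw [ballot_succ ht, Finset.sum_range_succ, ← ballot_succ ht.le]

theorem ballot_zero_right (n : ℕ) : ballot n 0 = 1 := by
  induction n with
  | zero =>
    rw [ballot, Nat.card_eq_one_iff_unique]
    exact ⟨⟨fun π ρ => Subtype.ext (Subsingleton.elim _ _)⟩,
      ⟨⟨1, fun i => i.elim0, fun i => i.elim0⟩⟩⟩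
  | succ n ih => simpa [ih] using ballot_succ n.zero_le

theorem ballot_add_choose {n t : ℕ} (ht : t ≤ n) :
    ballot n t + (n + t).choose (n + 1) = (n + t).choose n := by
  induction n generalizing t with
  | zero => simp [Nat.le_zero.mp ht, ballot_zero_right]
  | succ n ihn =>
    induction t with
    | zero => simp [ballot_zero_right]
    | succ t iht =>
      have hleft := iht (by omega)
      have hpascal (k : ℕ) := Nat.choose_succ_succ' (n + 1 + t) k
      rw [← add_assoc, hpascal, hpascal]
      rcases (Nat.succ_le_succ_iff.mp ht).eq_or_lt with rfl | htn
      · have hsymm : (t + 1 + t).choose t = (t + 1 + t).choose (t + 1) :=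
          Nat.choose_symm_of_eq_add (by ring)
        rw [ballot_succ_self]
        omega
      · have hbelow := ihn (t := t + 1) htn
        rw [← add_assoc, add_right_comm] at hbelow
        rw [ballot_succ_succ htn]
        omega

theorem card_avoids123 (n : ℕ) :
    Nat.card {π : Equiv.Perm (Fin n) // Avoids123 π} = catalan n := by
  rw [← ballot_of_le_succ n.le_succ]
  have hballot := ballot_add_choose (le_refl n)
  have hcatalan := succ_mul_catalan_eq_centralBinom n
  have hchoose := Nat.choose_succ_right_eq (n + n) n
  rw [Nat.centralBinom_eq_two_mul_choose, two_mul] at hcatalan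
  rw [Nat.add_sub_cancel] at hchoose
  refine Nat.eq_of_mul_eq_mul_left n.succ_pos ?_
  rw [hcatalan]
  linarith [congrArg ((n + 1) * ·) hballot]

theorem card_avoids123_ne_last_add_catalan (n : ℕ) :
    Nat.card {π : Equiv.Perm (Fin (n + 1)) // Avoids123 π ∧ π 0 ≠ Fin.last n} + catalan n =
      catalan (n + 1) := by
  have hlast : Nat.card {σ : Equiv.Perm (Fin n) // Avoids123 (consPerm (Fin.last n) σ)} =
      catalan n := by
    rw [← card_avoids123]
    refine Nat.card_congr <| Equiv.subtypeEquivRight fun σ => ?_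
    rw [avoids123_consPerm]
    exact and_iff_left (noninversionsBelow_of_le_succ σ n.le_succ)
  rw [← card_avoids123 (n + 1), card_perm_succ_eq_sum, card_perm_succ_eq_sum,
    Fin.sum_univ_castSucc, Fin.sum_univ_castSucc, hlast]
  simp [Fin.castSucc_ne_last]

end BallotNumbers

section FixedOccurrence

/-- The three points `a`, `b`, `c` are the fixed points of `π`, and they form its only occurrence
of the pattern 123. -/
structure IsUniqueFixedOcc {n : ℕ} (π : Equiv.Perm (Fin n)) (a b c : Fin n) : Prop where
  fixed_iff : ∀ p, π p = p ↔ p = a ∨ p = b ∨ p = c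
  occ_iff : ∀ i j k, IsOcc123 π i j k ↔ i = a ∧ j = b ∧ k = c

theorem exists_lt_lt_fixed_iff_of_fixedPts_eq_three {n : ℕ} {π : Equiv.Perm (Fin n)}
    (h : fixedPts π = 3) :
    ∃ a b c, a < b ∧ b < c ∧ ∀ p, π p = p ↔ p = a ∨ p = b ∨ p = c := by
  have hcard : (Finset.univ.filter fun i => π i = i).card = 3 := h
  set e := (Finset.univ.filter fun i => π i = i).orderEmbOfFin hcard with he
  refine ⟨e 0, e 1, e 2, by simp, by simp, fun p => ?_⟩
  have hrange : p ∈ Set.range e ↔ π p = p := by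
    rw [he, Finset.range_orderEmbOfFin]
    simp
  rw [← hrange, Set.mem_range, Fin.exists_fin_succ, Fin.exists_fin_succ, Fin.exists_fin_one]
  simp only [eq_comm (a := p)]
  rfl

theorem occ123_eq_one_and_fixedPts_eq_three_iff {n : ℕ} (π : Equiv.Perm (Fin n)) :
    occ123 π = 1 ∧ fixedPts π = 3 ↔ ∃ a b c, IsUniqueFixedOcc π a b c := by
  constructor
  · rintro ⟨hocc, hfix⟩
    obtain ⟨a, b, c, hab, hbc, hfixed⟩ := exists_lt_lt_fixed_iff_of_fixedPts_eq_three hfix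
    have habc : IsOcc123 π a b c := by
      refine ⟨hab, hbc, ?_, ?_⟩ <;> simpa [(hfixed _).mpr]
    refine ⟨a, b, c, hfixed, fun i j k => ⟨(occ123_eq_one_iff habc).mp hocc i j k, ?_⟩⟩
    rintro ⟨rfl, rfl, rfl⟩
    exact habc
  · rintro ⟨a, b, c, h⟩
    have habc : IsOcc123 π a b c := (h.occ_iff a b c).mpr ⟨rfl, rfl, rfl⟩
    refine ⟨(occ123_eq_one_iff habc).mpr fun i j k => (h.occ_iff i j k).mp, ?_⟩
    have hset : (Finset.univ.filter fun i => π i = i) = {a, b, c} := by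
      ext p
      simp [h.fixed_iff]
    rw [fixedPts, hset]
    exact Finset.card_eq_three.mpr
      ⟨a, b, c, habc.1.ne, (habc.1.trans habc.2.1).ne, habc.2.1.ne, rfl⟩

namespace IsUniqueFixedOcc

variable {n : ℕ} {π : Equiv.Perm (Fin n)} {a b c : Fin n}

theorem map_left (h : IsUniqueFixedOcc π a b c) : π a = a :=
  (h.fixed_iff a).mpr (.inl rfl)

theorem map_middle (h : IsUniqueFixedOcc π a b c) : π b = b :=
  (h.fixed_iff b).mpr (.inr (.inl rfl))

theorem map_right (h : IsUniqueFixedOcc π a b c) : π c = c :=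
  (h.fixed_iff c).mpr (.inr (.inr rfl))

theorem left_lt_middle (h : IsUniqueFixedOcc π a b c) : a < b :=
  ((h.occ_iff a b c).mpr ⟨rfl, rfl, rfl⟩).1

theorem middle_lt_right (h : IsUniqueFixedOcc π a b c) : b < c :=
  ((h.occ_iff a b c).mpr ⟨rfl, rfl, rfl⟩).2.1

theorem middle_lt_map (h : IsUniqueFixedOcc π a b c) {i : Fin n} (hi : i < b) (hia : i ≠ a) :
    b < π i := by
  by_contra! hle
  have hlt : π i < π b := (h.map_middle.symm ▸ hle).lt_of_ne (π.injective.ne hi.ne)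
  have hbc : π b < π c := by rw [h.map_middle, h.map_right]; exact h.middle_lt_right
  exact hia ((h.occ_iff i b c).mp ⟨hi, h.middle_lt_right, hlt, hbc⟩).1

theorem map_lt_middle (h : IsUniqueFixedOcc π a b c) {i : Fin n} (hi : b < i) (hic : i ≠ c) :
    π i < b := by
  by_contra! hle
  have hlt : π b < π i := (h.map_middle.symm ▸ hle).lt_of_ne (π.injective.ne hi.ne)
  have hab : π a < π b := by rw [h.map_middle, h.map_left]; exact h.left_lt_middle
  exact hic ((h.occ_iff a b i).mp ⟨h.left_lt_middle, hi, hab, hlt⟩).2.2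

theorem card_Iio_eq_card_Ioi (h : IsUniqueFixedOcc π a b c) (hπ : IsInvolution π) :
    (Finset.Iio b).card = (Finset.Ioi b).card := by
  have ha : a ∈ Finset.Iio b := Finset.mem_Iio.mpr h.left_lt_middle
  have hc : c ∈ Finset.Ioi b := Finset.mem_Ioi.mpr h.middle_lt_right
  rw [← Finset.card_erase_add_one ha, ← Finset.card_erase_add_one hc, Nat.add_right_cancel_iff]
  refine Finset.card_nbij' π π (fun i hi => ?_) (fun i hi => ?_) (fun i _ => hπ i) fun i _ => hπ i
  · simp only [Finset.coe_erase, Finset.coe_Iio, Set.mem_sdiff_singleton, Set.mem_Iio] at hi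
    simp only [Finset.coe_erase, Finset.coe_Ioi, Set.mem_sdiff_singleton, Set.mem_Ioi]
    refine ⟨h.middle_lt_map hi.1 hi.2, ?_⟩
    rw [← h.map_right]
    exact π.injective.ne (hi.1.trans h.middle_lt_right).ne
  · simp only [Finset.coe_erase, Finset.coe_Ioi, Set.mem_sdiff_singleton, Set.mem_Ioi] at hi
    simp only [Finset.coe_erase, Finset.coe_Iio, Set.mem_sdiff_singleton, Set.mem_Iio]
    refine ⟨h.map_lt_middle hi.1 hi.2, ?_⟩
    rw [← h.map_left]
    exact π.injective.ne (h.left_lt_middle.trans hi.1).ne'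

theorem two_mul_middle_add_one (h : IsUniqueFixedOcc π a b c) (hπ : IsInvolution π) :
    2 * (b : ℕ) + 1 = n := by
  have hcard := h.card_Iio_eq_card_Ioi hπ
  rw [Fin.card_Iio, Fin.card_Ioi] at hcard
  omega

end IsUniqueFixedOcc

end FixedOccurrence

section Reflection

variable {m : ℕ}

/-- The midpoint of `Fin (2 * m + 1)`. -/
def center (m : ℕ) : Fin (2 * m + 1) := ⟨m, by omega⟩

/-- The embedding of `Fin (m + 1)` onto the points up to the midpoint, which is shared with
`highHalf`. -/
def lowHalf (m : ℕ) : Fin (m + 1) ↪o Fin (2 * m + 1) :=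
  Fin.castLEOrderEmb (by omega)

/-- The embedding of `Fin (m + 1)` onto the points from the midpoint on, which is shared with
`lowHalf`. -/
def highHalf (m : ℕ) : Fin (m + 1) ↪o Fin (2 * m + 1) :=
  (Fin.natAddOrderEmb m).trans (Fin.castOrderIso (by omega)).toOrderEmbedding

@[simp]
theorem val_center : (center m : ℕ) = m := rfl

@[simp]
theorem val_lowHalf (i : Fin (m + 1)) : (lowHalf m i : ℕ) = i := rfl

@[simp]
theorem val_highHalf (i : Fin (m + 1)) : (highHalf m i : ℕ) = m + i := rfl

@[simp]
theorem lowHalf_last : lowHalf m (Fin.last m) = center m := rfl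

@[simp]
theorem highHalf_zero : highHalf m 0 = center m := rfl

theorem lowHalf_lt_center {i : Fin (m + 1)} (hi : i ≠ Fin.last m) : lowHalf m i < center m :=
  (lowHalf m).lt_iff_lt.mpr (Fin.lt_last_iff_ne_last.mpr hi)

theorem lowHalf_le_center (i : Fin (m + 1)) : lowHalf m i ≤ center m :=
  (lowHalf m).le_iff_le.mpr (Fin.le_last i)

theorem center_lt_highHalf {i : Fin (m + 1)} (hi : i ≠ 0) : center m < highHalf m i :=
  (highHalf m).lt_iff_lt.mpr (Fin.pos_iff_ne_zero.mpr hi)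

theorem center_le_highHalf (i : Fin (m + 1)) : center m ≤ highHalf m i :=
  (highHalf m).le_iff_le.mpr (Fin.zero_le i)

theorem exists_lowHalf_eq {p : Fin (2 * m + 1)} (hp : p ≤ center m) : ∃ i, lowHalf m i = p :=
  ⟨⟨p, Nat.lt_succ_of_le hp⟩, rfl⟩

theorem exists_highHalf_eq {p : Fin (2 * m + 1)} (hp : center m ≤ p) : ∃ i, highHalf m i = p := by
  have hle : m ≤ (p : ℕ) := hp
  exact ⟨⟨p - m, by omega⟩, Fin.ext (Nat.add_sub_cancel' hle)⟩

theorem exists_lowHalf_apply_or_highHalf (τ : Equiv.Perm (Fin (m + 1))) (p : Fin (2 * m + 1)) :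
    ∃ e, lowHalf m (τ e) = p ∨ highHalf m e = p := by
  rcases le_total p (center m) with hp | hp
  · obtain ⟨i, rfl⟩ := exists_lowHalf_eq hp
    exact ⟨τ.symm i, .inl (by rw [τ.apply_symm_apply])⟩
  · obtain ⟨e, rfl⟩ := exists_highHalf_eq hp
    exact ⟨e, .inr rfl⟩

/-- The points of the graph of `τ` in its first column or top row, which `reflect τ` moves to the
diagonal. -/
def OnBoundary (τ : Equiv.Perm (Fin (m + 1))) (e : Fin (m + 1)) : Prop :=
  e = 0 ∨ τ e = Fin.last m

instance (τ : Equiv.Perm (Fin (m + 1))) : DecidablePred (OnBoundary τ) :=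
  fun _ => inferInstanceAs (Decidable (_ ∨ _))

/-- The underlying function of `reflect`. -/
def reflectFun (τ : Equiv.Perm (Fin (m + 1))) (p : Fin (2 * m + 1)) : Fin (2 * m + 1) :=
  if hp : p ≤ center m then
    let e := τ.symm ⟨p, Nat.lt_succ_of_le hp⟩
    if OnBoundary τ e then p else highHalf m e
  else
    let e : Fin (m + 1) := ⟨p - m, by omega⟩
    if OnBoundary τ e then p else lowHalf m (τ e)

theorem reflectFun_lowHalf (τ : Equiv.Perm (Fin (m + 1))) (e : Fin (m + 1)) :
    reflectFun τ (lowHalf m (τ e)) =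
      if OnBoundary τ e then lowHalf m (τ e) else highHalf m e := by
  simp [reflectFun, lowHalf_le_center]

theorem reflectFun_highHalf (τ : Equiv.Perm (Fin (m + 1))) (e : Fin (m + 1)) :
    reflectFun τ (highHalf m e) =
      if OnBoundary τ e then highHalf m e else lowHalf m (τ e) := by
  rcases eq_or_ne e 0 with rfl | he
  · have hlast : (⟨m, m.lt_succ_self⟩ : Fin (m + 1)) = Fin.last m := rfl
    simp [reflectFun, OnBoundary, hlast]
  · simp [reflectFun, (center_lt_highHalf he).not_ge]

theorem reflectFun_involutive (τ : Equiv.Perm (Fin (m + 1))) :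
    Function.Involutive (reflectFun τ) := by
  intro p
  obtain ⟨e, rfl | rfl⟩ := exists_lowHalf_apply_or_highHalf τ p <;>
    by_cases he : OnBoundary τ e <;> simp [reflectFun_lowHalf, reflectFun_highHalf, he]

/-- The involution whose graph consists of the center, of the graph of `τ` placed in the lower right
quadrant and of the mirror image of the latter, where the points of `OnBoundary` have been replaced
by fixed points. -/
def reflect (τ : Equiv.Perm (Fin (m + 1))) : Equiv.Perm (Fin (2 * m + 1)) :=
  (reflectFun_involutive τ).toPerm

theorem isInvolution_reflect (τ : Equiv.Perm (Fin (m + 1))) : IsInvolution (reflect τ) :=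
  reflectFun_involutive τ

theorem reflect_lowHalf (τ : Equiv.Perm (Fin (m + 1))) (e : Fin (m + 1)) :
    reflect τ (lowHalf m (τ e)) = if OnBoundary τ e then lowHalf m (τ e) else highHalf m e :=
  reflectFun_lowHalf τ e

theorem reflect_highHalf (τ : Equiv.Perm (Fin (m + 1))) (e : Fin (m + 1)) :
    reflect τ (highHalf m e) = if OnBoundary τ e then highHalf m e else lowHalf m (τ e) :=
  reflectFun_highHalf τ e

theorem reflect_center (τ : Equiv.Perm (Fin (m + 1))) : reflect τ (center m) = center m := by
  simpa [OnBoundary] using reflect_highHalf τ 0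

theorem min_reflect_highHalf (τ : Equiv.Perm (Fin (m + 1))) {e : Fin (m + 1)} (he : e ≠ 0) :
    min (reflect τ (highHalf m e)) (center m) = lowHalf m (τ e) := by
  rw [reflect_highHalf]
  split_ifs with hbd
  · rw [hbd.resolve_left he, lowHalf_last, min_eq_right (center_le_highHalf e)]
  · exact min_eq_left (lowHalf_le_center _)

theorem reflect_eq_self_iff (τ : Equiv.Perm (Fin (m + 1))) (p : Fin (2 * m + 1)) :
    reflect τ p = p ↔
      p = lowHalf m (τ 0) ∨ p = center m ∨ p = highHalf m (τ.symm (Fin.last m)) := by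
  constructor
  · intro hp
    obtain ⟨e, rfl | rfl⟩ := exists_lowHalf_apply_or_highHalf τ p
    · by_cases hbd : OnBoundary τ e
      · rcases hbd with rfl | he <;> simp [*]
      · rw [reflect_lowHalf, if_neg hbd] at hp
        refine .inr (.inl (le_antisymm (lowHalf_le_center _) ?_))
        exact hp ▸ center_le_highHalf e
    · by_cases hbd : OnBoundary τ e
      · rcases hbd with rfl | he
        · simp
        · exact .inr (.inr (by rw [← he, τ.symm_apply_apply]))
      · rw [reflect_highHalf, if_neg hbd] at hp
        refine .inr (.inl (le_antisymm ?_ (center_le_highHalf _)))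
        exact hp ▸ lowHalf_le_center _
  · rintro (rfl | rfl | rfl)
    · simp [reflect_lowHalf, OnBoundary]
    · exact reflect_center τ
    · simp [reflect_highHalf, OnBoundary]

theorem eq_lowHalf_of_lt_center_of_reflect_le {τ : Equiv.Perm (Fin (m + 1))}
    {p : Fin (2 * m + 1)} (hp : p < center m) (hπ : reflect τ p ≤ center m) :
    p = lowHalf m (τ 0) := by
  obtain ⟨i, rfl⟩ := exists_lowHalf_eq hp.le
  obtain ⟨e, rfl⟩ := τ.surjective i
  rw [reflect_lowHalf] at hπ
  split_ifs at hπ with hbd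
  · rcases hbd with rfl | he
    · rfl
    · simp [he] at hp
  · exact absurd hπ (center_lt_highHalf fun he => hbd (.inl he)).not_ge

theorem eq_highHalf_of_center_lt_of_le_reflect {τ : Equiv.Perm (Fin (m + 1))}
    {p : Fin (2 * m + 1)} (hp : center m < p) (hπ : center m ≤ reflect τ p) :
    p = highHalf m (τ.symm (Fin.last m)) := by
  obtain ⟨e, rfl⟩ := exists_highHalf_eq hp.le
  rw [reflect_highHalf] at hπ
  split_ifs at hπ with hbd
  · rcases hbd with rfl | he
    · simp at hp
    · rw [← he, τ.symm_apply_apply]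
  · exact absurd hπ (lowHalf_lt_center fun he => hbd (.inr he)).not_ge

theorem not_isOcc123_reflect_of_center_lt {τ : Equiv.Perm (Fin (m + 1))} (hτ : Avoids123 τ)
    {i j k : Fin (2 * m + 1)} (hj : center m < j) : ¬ IsOcc123 (reflect τ) i j k := by
  rintro ⟨hij, hjk, hπij, hπjk⟩
  have hk := hj.trans hjk
  obtain ⟨y, rfl⟩ := exists_highHalf_eq hj.le
  obtain ⟨z, rfl⟩ := exists_highHalf_eq hk.le
  have hy : y ≠ 0 := by rintro rfl; simp at hj
  have hz : z ≠ 0 := by rintro rfl; simp at hk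
  have hπj : reflect τ (highHalf m y) < center m := by
    by_contra! hle
    refine hjk.ne ?_
    rw [eq_highHalf_of_center_lt_of_le_reflect hj hle,
      eq_highHalf_of_center_lt_of_le_reflect hk (hle.trans hπjk.le)]
  have hτy : lowHalf m (τ y) = reflect τ (highHalf m y) := by
    rw [← min_reflect_highHalf τ hy, min_eq_left hπj.le]
  have hτyz : τ y < τ z := by
    rw [← (lowHalf m).lt_iff_lt, hτy, ← min_reflect_highHalf τ hz]
    exact lt_min hπjk hπj
  suffices ∃ x, x < y ∧ τ x < τ y by
    obtain ⟨x, hxy, hτxy⟩ := this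
    exact hτ x y z ⟨hxy, (highHalf m).lt_iff_lt.mp hjk, hτxy, hτyz⟩
  rcases lt_or_ge i (center m) with hi | hi
  · have hi0 := eq_lowHalf_of_lt_center_of_reflect_le hi (hπij.trans hπj).le
    refine ⟨0, Fin.pos_iff_ne_zero.mpr hy, ?_⟩
    rwa [hi0, (reflect_eq_self_iff τ _).mpr (.inl rfl), ← hτy, (lowHalf m).lt_iff_lt] at hπij
  · obtain ⟨x, rfl⟩ := exists_highHalf_eq hi
    have hx : x ≠ 0 := by
      rintro rfl
      rw [highHalf_zero, reflect_center] at hπij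
      exact hπij.not_gt hπj
    refine ⟨x, (highHalf m).lt_iff_lt.mp hij, ?_⟩
    rw [← (lowHalf m).lt_iff_lt, hτy, ← min_reflect_highHalf τ hx]
    exact (min_le_left _ _).trans_lt hπij

theorem eq_of_isOcc123_reflect {τ : Equiv.Perm (Fin (m + 1))} (hτ : Avoids123 τ)
    {i j k : Fin (2 * m + 1)} (h : IsOcc123 (reflect τ) i j k) :
    i = lowHalf m (τ 0) ∧ j = center m ∧ k = highHalf m (τ.symm (Fin.last m)) := by
  have hinv := h.map_of_involutive (isInvolution_reflect τ)
  obtain ⟨hij, hjk, hπij, hπjk⟩ := h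
  rcases lt_trichotomy j (center m) with hj | rfl | hj
  · -- Applying the involution to the occurrence moves its middle entry above the center.
    rcases le_or_gt (reflect τ j) (center m) with hπj | hπj
    · have hj0 := eq_lowHalf_of_lt_center_of_reflect_le hj hπj
      have hi0 := eq_lowHalf_of_lt_center_of_reflect_le (hij.trans hj) (hπij.le.trans hπj)
      exact absurd (hi0.trans hj0.symm) hij.ne
    · exact absurd hinv (not_isOcc123_reflect_of_center_lt hτ hπj)
  · rw [reflect_center] at hπij hπjk
    exact ⟨eq_lowHalf_of_lt_center_of_reflect_le hij hπij.le, rfl,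
      eq_highHalf_of_center_lt_of_le_reflect hjk hπjk.le⟩
  · exact absurd ⟨hij, hjk, hπij, hπjk⟩ (not_isOcc123_reflect_of_center_lt hτ hj)

theorem isUniqueFixedOcc_reflect {τ : Equiv.Perm (Fin (m + 1))} (hτ : Avoids123 τ)
    (h0 : τ 0 ≠ Fin.last m) :
    IsUniqueFixedOcc (reflect τ) (lowHalf m (τ 0)) (center m)
      (highHalf m (τ.symm (Fin.last m))) where
  fixed_iff := reflect_eq_self_iff τ
  occ_iff i j k := by
    refine ⟨eq_of_isOcc123_reflect hτ, ?_⟩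
    rintro ⟨rfl, rfl, rfl⟩
    have hlow := lowHalf_lt_center h0
    have hhigh : center m < highHalf m (τ.symm (Fin.last m)) :=
      center_lt_highHalf fun h => h0 (by rw [← h, τ.apply_symm_apply])
    have hfixed := reflect_eq_self_iff τ
    refine ⟨hlow, hhigh, ?_, ?_⟩ <;> simpa [(hfixed _).mpr]

theorem reflect_injective :
    Function.Injective (reflect : Equiv.Perm (Fin (m + 1)) → Equiv.Perm (Fin (2 * m + 1))) := by
  intro τ ρ h
  refine perm_ext_of_forall_ne 0 fun e he => (lowHalf m).injective ?_
  rw [← min_reflect_highHalf τ he, ← min_reflect_highHalf ρ he, h]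

theorem exists_quadrant {π : Equiv.Perm (Fin (2 * m + 1))} {a c : Fin (2 * m + 1)}
    (h : IsUniqueFixedOcc π a (center m) c) :
    ∃ τ : Equiv.Perm (Fin (m + 1)), lowHalf m (τ 0) = a ∧
      highHalf m (τ.symm (Fin.last m)) = c ∧
      ∀ e, ¬ OnBoundary τ e → lowHalf m (τ e) = π (highHalf m e) := by
  -- The factor after `π` is the three-cycle `center m ↦ a ↦ c ↦ center m`, so `ψ` maps the upper
  -- half bijectively onto the lower half, both including the center.
  set ψ := π * Equiv.swap (center m) c * Equiv.swap a (center m) with hψ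
  have hca := (h.left_lt_middle.trans h.middle_lt_right).ne'
  have hcb := h.middle_lt_right.ne'
  have hcenter : ψ (center m) = a := by
    rw [hψ, Equiv.Perm.mul_apply, Equiv.Perm.mul_apply, Equiv.swap_apply_right,
      Equiv.swap_apply_of_ne_of_ne h.left_lt_middle.ne hca.symm, h.map_left]
  have hright : ψ c = center m := by
    rw [hψ, Equiv.Perm.mul_apply, Equiv.Perm.mul_apply, Equiv.swap_apply_of_ne_of_ne hca hcb,
      Equiv.swap_apply_right, h.map_middle]
  have hother {p : Fin (2 * m + 1)} (hp : center m < p) (hpc : p ≠ c) : ψ p = π p := by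
    rw [hψ, Equiv.Perm.mul_apply, Equiv.Perm.mul_apply,
      Equiv.swap_apply_of_ne_of_ne (h.left_lt_middle.trans hp).ne' hp.ne',
      Equiv.swap_apply_of_ne_of_ne hp.ne' hpc]
  have hle (e : Fin (m + 1)) : ψ (highHalf m e) ≤ center m := by
    rcases (center_le_highHalf e).eq_or_lt with he | he
    · rw [← he, hcenter]
      exact h.left_lt_middle.le
    by_cases hc : highHalf m e = c
    · rw [hc, hright]
    · rw [hother he hc]
      exact (h.map_lt_middle he hc).le
  choose t ht using fun e => exists_lowHalf_eq (hle e)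
  have ht_inj : Function.Injective t := fun x y hxy =>
    (highHalf m).injective <| ψ.injective <| by rw [← ht, ← ht, hxy]
  have ht_last {e : Fin (m + 1)} (he : highHalf m e = c) : t e = Fin.last m :=
    (lowHalf m).injective (by rw [ht, he, hright, lowHalf_last])
  refine ⟨Equiv.ofBijective t (Finite.injective_iff_bijective.mp ht_inj),
    (ht 0).trans hcenter, ?_, fun e hbd => (ht e).trans (hother ?_ fun he => ?_)⟩
  · obtain ⟨e, he⟩ := exists_highHalf_eq h.middle_lt_right.le
    rw [← he, (Equiv.symm_apply_eq _).mpr (ht_last he).symm]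
  · exact center_lt_highHalf fun he => hbd (.inl he)
  · exact hbd (.inr (ht_last he))

section Quadrant

variable {π : Equiv.Perm (Fin (2 * m + 1))} {τ : Equiv.Perm (Fin (m + 1))}

theorem avoids123_of_quadrant
    (h : IsUniqueFixedOcc π (lowHalf m (τ 0)) (center m) (highHalf m (τ.symm (Fin.last m))))
    (hquad : ∀ e, ¬ OnBoundary τ e → lowHalf m (τ e) = π (highHalf m e)) : Avoids123 τ := by
  rintro x y z ⟨hxy, hyz, hτxy, hτyz⟩
  have hy : y ≠ 0 := (Fin.zero_le x |>.trans_lt hxy).ne'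
  have hz : z ≠ 0 := (Fin.zero_le y |>.trans_lt hyz).ne'
  have hπy : lowHalf m (τ y) = π (highHalf m y) := hquad y fun hbd =>
    (hbd.resolve_left hy ▸ hτyz).not_ge (Fin.le_last _)
  have hπz : lowHalf m (τ z) ≤ π (highHalf m z) := by
    by_cases hbd : OnBoundary τ z
    · rw [(τ.eq_symm_apply).mpr (hbd.resolve_left hz), h.map_right]
      exact (lowHalf_le_center _).trans (center_le_highHalf _)
    · exact (hquad z hbd).le
  obtain ⟨p, hpy, hπp⟩ : ∃ p, p < highHalf m y ∧ π p = lowHalf m (τ x) := by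
    rcases eq_or_ne x 0 with rfl | hx
    · exact ⟨_, (lowHalf_le_center _).trans_lt (center_lt_highHalf hy), h.map_left⟩
    · refine ⟨highHalf m x, (highHalf m).lt_iff_lt.mpr hxy, (hquad x fun hbd => ?_).symm⟩
      exact (hbd.resolve_left hx ▸ hτxy).not_ge (Fin.le_last _)
  have hocc : IsOcc123 π p (highHalf m y) (highHalf m z) := by
    refine ⟨hpy, (highHalf m).lt_iff_lt.mpr hyz, ?_, ?_⟩
    · rwa [hπp, ← hπy, (lowHalf m).lt_iff_lt]
    · rw [← hπy]
      exact ((lowHalf m).lt_iff_lt.mpr hτyz).trans_le hπz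
  exact (center_lt_highHalf hy).ne' ((h.occ_iff _ _ _).mp hocc).2.1

theorem reflect_eq_of_quadrant (hπ : IsInvolution π)
    (h : IsUniqueFixedOcc π (lowHalf m (τ 0)) (center m) (highHalf m (τ.symm (Fin.last m))))
    (hquad : ∀ e, ¬ OnBoundary τ e → lowHalf m (τ e) = π (highHalf m e)) : reflect τ = π := by
  ext p : 1
  by_cases hp : reflect τ p = p
  · rw [hp, (h.fixed_iff p).mpr ((reflect_eq_self_iff τ p).mp hp)]
  obtain ⟨e, rfl | rfl⟩ := exists_lowHalf_apply_or_highHalf τ p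
  · have hbd : ¬ OnBoundary τ e := fun hbd => hp (by rw [reflect_lowHalf, if_pos hbd])
    rw [reflect_lowHalf, if_neg hbd, hquad e hbd, hπ]
  · have hbd : ¬ OnBoundary τ e := fun hbd => hp (by rw [reflect_highHalf, if_pos hbd])
    rw [reflect_highHalf, if_neg hbd, hquad e hbd]

end Quadrant

theorem exists_reflect_eq {π : Equiv.Perm (Fin (2 * m + 1))} (hπ : IsInvolution π)
    {a b c : Fin (2 * m + 1)} (h : IsUniqueFixedOcc π a b c) :
    ∃ τ : Equiv.Perm (Fin (m + 1)), (Avoids123 τ ∧ τ 0 ≠ Fin.last m) ∧ reflect τ = π := by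
  obtain rfl : b = center m := by
    have hb := h.two_mul_middle_add_one hπ
    exact Fin.ext (by rw [val_center]; omega)
  obtain ⟨τ, rfl, rfl, hquad⟩ := exists_quadrant h
  refine ⟨τ, ⟨avoids123_of_quadrant h hquad, fun h0 => ?_⟩, reflect_eq_of_quadrant hπ h hquad⟩
  exact h.left_lt_middle.ne (by rw [h0, lowHalf_last])

theorem iCountOnce123_three_eq_card_avoids123 (m : ℕ) :
    iCountOnce123 (2 * m + 1) 3 =
      Nat.card {τ : Equiv.Perm (Fin (m + 1)) // Avoids123 τ ∧ τ 0 ≠ Fin.last m} := by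
  refine (Nat.card_congr (Equiv.subtypeEquivRight fun π =>
    and_congr_right fun _ => occ123_eq_one_and_fixedPts_eq_three_iff π)).trans <| Eq.symm <|
      Nat.card_eq_of_bijective (fun τ => ⟨reflect τ.1, isInvolution_reflect τ.1, _, _, _,
        isUniqueFixedOcc_reflect τ.2.1 τ.2.2⟩) ⟨fun τ ρ h => ?_, ?_⟩
  · exact Subtype.ext (reflect_injective (congrArg Subtype.val h))
  · rintro ⟨π, hπ, a, b, c, h⟩
    obtain ⟨τ, hτ, hτπ⟩ := exists_reflect_eq hπ h
    exact ⟨⟨τ, hτ⟩, Subtype.ext hτπ⟩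

theorem iCountOnce123_three_add_catalan (m : ℕ) :
    iCountOnce123 (2 * m + 1) 3 + catalan m = catalan (m + 1) := by
  rw [iCountOnce123_three_eq_card_avoids123, card_avoids123_ne_last_add_catalan]

end Reflection

section CatalanDifference

theorem add_two_mul_catalan_succ (n : ℕ) :
    (n + 2) * catalan (n + 1) = 2 * (2 * n + 1) * catalan n := by
  refine Nat.eq_of_mul_eq_mul_left n.succ_pos ?_
  have hcentral := Nat.succ_mul_centralBinom_succ n
  rw [← succ_mul_catalan_eq_centralBinom, ← succ_mul_catalan_eq_centralBinom] at hcentral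
  linarith

theorem two_mul_add_one_mul_catalan (n : ℕ) :
    (2 * n + 1) * catalan n = (2 * n + 1).choose n := by
  refine Nat.eq_of_mul_eq_mul_left n.succ_pos ?_
  have hchoose := Nat.add_one_mul_choose_eq (2 * n) n
  have hsymm : (2 * n + 1).choose (n + 1) = (2 * n + 1).choose n :=
    Nat.choose_symm_of_eq_add (by ring)
  rw [← Nat.centralBinom_eq_two_mul_choose, ← succ_mul_catalan_eq_centralBinom, hsymm] at hchoose
  linarith

theorem mul_catalan_sub_catalan (n : ℕ) :
    (2 * n + 3) * (catalan (n + 2) - catalan (n + 1)) = 3 * (2 * n + 3).choose n := by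
  refine Nat.eq_of_mul_eq_mul_left (show 0 < n + 3 by omega) ?_
  have hrec : (n + 3) * catalan (n + 2) = 2 * (2 * n + 3) * catalan (n + 1) :=
    add_two_mul_catalan_succ (n + 1)
  have hcatalan : (2 * n + 3) * catalan (n + 1) = (2 * n + 3).choose (n + 1) :=
    two_mul_add_one_mul_catalan (n + 1)
  have hchoose : (2 * n + 3).choose (n + 1) * (n + 1) = (2 * n + 3).choose n * (n + 3) := by
    rw [Nat.choose_succ_right_eq, show 2 * n + 3 - n = n + 3 by omega]
  have hdiff : (n + 3) * (catalan (n + 2) - catalan (n + 1)) = 3 * (n + 1) * catalan (n + 1) := by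
    rw [Nat.mul_sub, hrec, ← Nat.sub_mul, show 2 * (2 * n + 3) - (n + 3) = 3 * (n + 1) by omega]
  calc (n + 3) * ((2 * n + 3) * (catalan (n + 2) - catalan (n + 1)))
      = (2 * n + 3) * ((n + 3) * (catalan (n + 2) - catalan (n + 1))) := by ring
    _ = 3 * ((2 * n + 3) * catalan (n + 1) * (n + 1)) := by rw [hdiff]; ring
    _ = (n + 3) * (3 * (2 * n + 3).choose n) := by rw [hcatalan, hchoose]; ring

end CatalanDifference

/-- For every odd `n ≥ 3`, `n · i_n^3(∅;123) = 3 · C(n, (n-3)/2)`, and moreover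
`i_n^3(∅;123) = C_{(n+1)/2} - C_{(n-1)/2}` where `C_m` is the `m`-th Catalan number. -/
theorem statement9 (n : ℕ) (hn : 3 ≤ n) (hodd : Odd n) :
    n * iCountOnce123 n 3 = 3 * n.choose ((n - 3) / 2) ∧
    iCountOnce123 n 3 = catalan ((n + 1) / 2) - catalan ((n - 1) / 2) := by
  obtain ⟨m, rfl⟩ : ∃ m, n = 2 * (m + 1) + 1 := by
    obtain ⟨k, rfl⟩ := hodd
    exact ⟨k - 1, by omega⟩
  have hcount : iCountOnce123 (2 * (m + 1) + 1) 3 = catalan (m + 2) - catalan (m + 1) :=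
    Nat.eq_sub_of_add_eq (iCountOnce123_three_add_catalan (m + 1))
  rw [show (2 * (m + 1) + 1 - 3) / 2 = m by omega,
    show (2 * (m + 1) + 1 + 1) / 2 = m + 2 by omega,
    show (2 * (m + 1) + 1 - 1) / 2 = m + 1 by omega, hcount]
  exact ⟨mul_catalan_sub_catalan m, rfl⟩
end

section
/- For every n ≥ 1 and every k ≠ 3, there is no involution of {1,2,…,n} with exactly k fixed points containing the pattern 123 exactly once; that is, i_n^k(∅;123) = 0 whenever k ≠ 3 (and also whenever n is even). -/
/-!
An involution `f` sends an occurrence `(a, b, c)` of 123 to the occurrence `(f a, f b, f c)`, so if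
there is only one occurrence then its three entries are fixed points. Any further fixed point could
replace `a` (if it lies below `b`) or `c` (if it lies above `b`), giving a second occurrence. Hence
there are exactly three fixed points, and `n` is odd because an involution moves an even number of
points.
-/

open Function

/-- The occurrences of the pattern 123 in a map `f` between ordered types, as triples of
positions. For a permutation of `Fin n` their number is `occ123`. -/
def occurrences123 {α β : Type*} [LT α] [LT β] (f : α → β) : Set (α × α × α) :=
  {t | t.1 < t.2.1 ∧ t.2.1 < t.2.2 ∧ f t.1 < f t.2.1 ∧ f t.2.1 < f t.2.2}

theorem mapsTo_occurrences123_of_involutive {α : Type*} [LT α] {f : α → α} (hf : Involutive f) :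
    Set.MapsTo (Prod.map f (Prod.map f f)) (occurrences123 f) (occurrences123 f) := by
  rintro ⟨a, b, c⟩ ⟨hab, hbc, hfab, hfbc⟩
  refine ⟨hfab, hfbc, ?_, ?_⟩
  · simpa only [Prod.map_apply, hf _] using hab
  · simpa only [Prod.map_apply, hf _] using hbc

theorem isFixedPt_of_occurrences123_eq_singleton {α : Type*} [LT α] {f : α → α} {a b c : α}
    (hf : Involutive f) (h : occurrences123 f = {(a, b, c)}) :
    IsFixedPt f a ∧ IsFixedPt f b ∧ IsFixedPt f c := by
  have mem : (a, b, c) ∈ occurrences123 f := h ▸ Set.mem_singleton _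
  have image_mem : (f a, f b, f c) ∈ occurrences123 f :=
    mapsTo_occurrences123_of_involutive hf mem
  simpa only [IsFixedPt, h, Set.mem_singleton_iff, Prod.mk.injEq] using image_mem

theorem fixedPoints_subset_of_occurrences123_eq_singleton {α : Type*} [LinearOrder α]
    {f : α → α} {a b c : α} (hb : IsFixedPt f b) (h : occurrences123 f = {(a, b, c)}) :
    fixedPoints f ⊆ {a, b, c} := by
  have unique : ∀ t ∈ occurrences123 f, t = (a, b, c) := fun t ht => by rwa [h] at ht
  obtain ⟨hab, hbc, hfab, hfbc⟩ : (a, b, c) ∈ occurrences123 f := h ▸ Set.mem_singleton _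
  intro d hd
  have map_lt_map {x y : α} (hx : IsFixedPt f x) (hy : IsFixedPt f y) (hxy : x < y) :
      f x < f y := by rwa [hx, hy]
  rcases lt_trichotomy d b with hdb | rfl | hbd
  · have triple_eq := unique (d, b, c) ⟨hdb, hbc, map_lt_map hd hb hdb, hfbc⟩
    exact Or.inl (congrArg (·.1) triple_eq)
  · exact Or.inr (Or.inl rfl)
  · have triple_eq := unique (a, b, d) ⟨hab, hbd, hfab, map_lt_map hb hd hbd⟩
    exact Or.inr (Or.inr (congrArg (·.2.2) triple_eq : d = c))

theorem ncard_fixedPoints_of_ncard_occurrences123_eq_one {α : Type*} [LinearOrder α] {f : α → α}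
    (hf : Involutive f) (h : (occurrences123 f).ncard = 1) : (fixedPoints f).ncard = 3 := by
  obtain ⟨⟨a, b, c⟩, habc⟩ := Set.ncard_eq_one.mp h
  obtain ⟨hab, hbc, -⟩ : (a, b, c) ∈ occurrences123 f := habc ▸ Set.mem_singleton _
  obtain ⟨ha, hb, hc⟩ := isFixedPt_of_occurrences123_eq_singleton hf habc
  have fixed_subset : {a, b, c} ⊆ fixedPoints f := by
    rintro d (rfl | rfl | rfl) <;> assumption
  have fixedPoints_eq : fixedPoints f = {a, b, c} :=
    (fixedPoints_subset_of_occurrences123_eq_singleton hb habc).antisymm fixed_subset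
  exact Set.ncard_eq_three.mpr ⟨a, b, c, hab.ne, (hab.trans hbc).ne, hbc.ne, fixedPoints_eq⟩

theorem even_ncard_fixedPoints_iff_of_involutive {α : Type*} [Finite α] {f : α → α}
    (hf : Involutive f) : Even (fixedPoints f).ncard ↔ Even (Nat.card α) := by
  classical
  have := Fintype.ofFinite α
  have card_modEq : Fintype.card α ≡ Fintype.card (fixedPoints f) [MOD 2] :=
    Equiv.Perm.card_fixedPoints_modEq (f := (f : Function.End α)) (n := 1) (funext hf)
  rw [← Nat.card_coe_set_eq, Nat.card_eq_fintype_card, Nat.card_eq_fintype_card,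
    Nat.even_iff, Nat.even_iff, card_modEq]

theorem fixedPts_eq_ncard_fixedPoints {n : ℕ} (π : Equiv.Perm (Fin n)) :
    fixedPts π = (fixedPoints π).ncard := by
  rw [fixedPts, ← Set.ncard_coe_finset, Finset.coe_filter_univ]
  rfl

theorem occ123_eq_ncard_occurrences123 {n : ℕ} (π : Equiv.Perm (Fin n)) :
    occ123 π = (occurrences123 π).ncard :=
  rfl

theorem IsInvolution.fixedPts_eq_three {n : ℕ} {π : Equiv.Perm (Fin n)} (hπ : IsInvolution π)
    (h : occ123 π = 1) : fixedPts π = 3 := by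
  rw [occ123_eq_ncard_occurrences123] at h
  rw [fixedPts_eq_ncard_fixedPoints]
  exact ncard_fixedPoints_of_ncard_occurrences123_eq_one hπ h

theorem IsInvolution.even_fixedPts_iff {n : ℕ} {π : Equiv.Perm (Fin n)} (hπ : IsInvolution π) :
    Even (fixedPts π) ↔ Even n := by
  rw [fixedPts_eq_ncard_fixedPoints, even_ncard_fixedPoints_iff_of_involutive hπ, Nat.card_fin]

/-- For every `n ≥ 1`, `i_n^k(∅;123) = 0` whenever `k ≠ 3`, and also whenever `n` is
even. -/
theorem statement10 (n k : ℕ) (hn : 1 ≤ n) (h : k ≠ 3 ∨ Even n) :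
    iCountOnce123 n k = 0 := by
  refine Nat.card_eq_zero.mpr (Or.inl ⟨?_⟩)
  rintro ⟨π, hπ, hocc, hfix⟩
  have three_fixed : fixedPts π = 3 := hπ.fixedPts_eq_three hocc
  rcases h with hk | hn_even
  · exact hk (hfix.symm.trans three_fixed)
  · have even_three : Even 3 := three_fixed ▸ hπ.even_fixedPts_iff.mpr hn_even
    exact absurd even_three (by decide)
end

section
/- For all integers n ≥ 1 and 0 ≤ k ≤ n, the number of involutions of {1,…,n} with exactly k fixed points containing the pattern 132 exactly once equals the number of involutions of {1,…,n} with exactly k fixed points containing the pattern 213 exactly once: i_n^k(∅;132) = i_n^k(∅;213). -/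
/-- The number of occurrences of the pattern 132 in a permutation of `Fin n`. -/
noncomputable def occ132 {n : ℕ} (π : Equiv.Perm (Fin n)) : ℕ :=
  Nat.card {t : Fin n × Fin n × Fin n //
    t.1 < t.2.1 ∧ t.2.1 < t.2.2 ∧ (π t.1 < π t.2.2 ∧ π t.2.2 < π t.2.1)}

/-- The number of occurrences of the pattern 213 in a permutation of `Fin n`. -/
noncomputable def occ213 {n : ℕ} (π : Equiv.Perm (Fin n)) : ℕ :=
  Nat.card {t : Fin n × Fin n × Fin n //
    t.1 < t.2.1 ∧ t.2.1 < t.2.2 ∧ (π t.2.1 < π t.1 ∧ π t.1 < π t.2.2)}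

/-- `i_n^k(∅;132)`: the number of involutions of `{1, …, n}` with exactly `k` fixed
points containing the pattern 132 exactly once. -/
noncomputable def iCountOnce132 (n k : ℕ) : ℕ :=
  Nat.card {π : Equiv.Perm (Fin n) // IsInvolution π ∧ occ132 π = 1 ∧ fixedPts π = k}

/-- `i_n^k(∅;213)`: the number of involutions of `{1, …, n}` with exactly `k` fixed
points containing the pattern 213 exactly once. -/
noncomputable def iCountOnce213 (n k : ℕ) : ℕ :=
  Nat.card {π : Equiv.Perm (Fin n) // IsInvolution π ∧ occ213 π = 1 ∧ fixedPts π = k}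

/-- The reverse-complement `i ↦ n + 1 - π (n + 1 - i)` of a permutation `π` of `{1, …, n}`, encoded
as conjugation by the order reversal of `Fin n`; it turns the pattern 132 into 213. -/
abbrev reverseComplement (n : ℕ) : Equiv.Perm (Fin n) ≃ Equiv.Perm (Fin n) :=
  Fin.revPerm.permCongr

section

variable {m n : ℕ} (e : Fin m ≃ Fin n) (π : Equiv.Perm (Fin m))

theorem isInvolution_permCongr : IsInvolution (e.permCongr π) ↔ IsInvolution π := by
  refine (e.forall_congr fun i => ?_).symm
  simp only [Equiv.permCongr_apply, Equiv.symm_apply_apply, EmbeddingLike.apply_eq_iff_eq]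

theorem fixedPts_permCongr : fixedPts (e.permCongr π) = fixedPts π := by
  refine (Finset.card_equiv e fun i => ?_).symm
  rw [Finset.mem_filter_univ, Finset.mem_filter_univ, Equiv.permCongr_apply,
    Equiv.symm_apply_apply, EmbeddingLike.apply_eq_iff_eq]

end

theorem occ213_reverseComplement {n : ℕ} (π : Equiv.Perm (Fin n)) :
    occ213 (reverseComplement n π) = occ132 π := by
  have reverse_involutive : Function.Involutive
      fun t : Fin n × Fin n × Fin n => (t.2.2.rev, t.2.1.rev, t.1.rev) :=
    fun t => by simp only [Fin.rev_rev]
  refine (Nat.card_congr (reverse_involutive.toPerm.subtypeEquiv fun ⟨a, b, c⟩ => ?_)).symm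
  simp only [Function.Involutive.coe_toPerm, Equiv.permCongr_apply, Fin.revPerm_symm,
    Fin.revPerm_apply, Fin.rev_rev, Fin.rev_lt_rev]
  tauto

/-- For all `n ≥ 1` and `0 ≤ k ≤ n`, `i_n^k(∅;132) = i_n^k(∅;213)`. -/
theorem statement13 (n k : ℕ) (hn : 1 ≤ n) (hk : k ≤ n) :
    iCountOnce132 n k = iCountOnce213 n k := by
  refine Nat.card_congr ((reverseComplement n).subtypeEquiv fun π => ?_)
  rw [isInvolution_permCongr, occ213_reverseComplement, fixedPts_permCongr]
end

section
/- For every integer n ≥ 3, the total number of involutions of {1,2,…,n} that contain the pattern 132 exactly once equals the binomial coefficient C(n-2, ⌊(n-3)/2⌋). -/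
/-- `i_n(∅;132)`: the number of involutions of `{1, …, n}` containing the pattern
132 exactly once. -/
noncomputable def iCountOnceTotal132 (n : ℕ) : ℕ :=
  Nat.card {π : Equiv.Perm (Fin n) // IsInvolution π ∧ occ132 π = 1}

/-!
Let `π` be an involution with a single occurrence of 132, at `a < b < c`. The triple
`(π a, π c, π b)` is an occurrence as well, so `π` fixes `a` and exchanges `b` and `c`.

If `π 0 = 0`, then every inversion among the later positions forms an occurrence with `0`, which
forces `π` to be the transposition of `1` and `2`. Otherwise `π 0 = q + 1`, and `π` is increasing
from position `q + 1` on: an inversion there would give an occurrence starting at `0`, but `a ≠ 0`.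
Deleting the cycle `(0, q + 1)` leaves an involution with a single occurrence that is increasing
from position `q` on, and every such involution arises this way.

Hence the number `g n p` of these involutions of `{0, …, n - 1}` that increase from position `p` on
satisfies `g (n + 2) (p + 1) = g (n + 2) p + g n p` for `2 ≤ p ≤ n`, with `g n 2 = 1` for `n ≥ 3`.
By Pascal's rule, `g n p` is the sum of the `(p - 2).choose j` over `p - ⌈n/2⌉ ≤ j ≤ ⌊n/2⌋`, which
is the single term `j = ⌊n/2⌋` when `p = n`.
-/

open Equiv
open Function (Involutive Semiconj)

section Preorder

variable {α : Type*} [Preorder α] {f : α → α}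

/-- The positions `a`, `b`, `c` form an occurrence of the pattern 132 in the map `f`. -/
def IsOcc132 (f : α → α) (a b c : α) : Prop :=
  a < b ∧ b < c ∧ f a < f c ∧ f c < f b

/-- The map `f` has exactly one occurrence of the pattern 132. -/
def ContainsOnce132 (f : α → α) : Prop :=
  ∃! t : α × α × α, IsOcc132 f t.1 t.2.1 t.2.2

theorem IsOcc132.apply_of_involutive {a b c : α} (h : IsOcc132 f a b c) (hf : Involutive f) :
    IsOcc132 f (f a) (f c) (f b) := by
  obtain ⟨hab, hbc, hac', hcb'⟩ := h
  exact ⟨hac', hcb', by rwa [hf, hf], by rwa [hf, hf]⟩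

theorem ContainsOnce132.exists_fixed_lt_swapped (h : ContainsOnce132 f) (hf : Involutive f) :
    ∃ a b c, a < b ∧ b < c ∧ f a = a ∧ f b = c ∧ f c = b ∧
      ∀ x y z, IsOcc132 f x y z → x = a ∧ y = b ∧ z = c := by
  obtain ⟨⟨a, b, c⟩, habc, huniq⟩ := h
  have huniq' : ∀ x y z, IsOcc132 f x y z → x = a ∧ y = b ∧ z = c := fun x y z hxyz ↦ by
    simpa only [Prod.mk.injEq] using huniq (x, y, z) hxyz
  obtain ⟨ha, hc, hb⟩ := huniq' _ _ _ (habc.apply_of_involutive hf)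
  exact ⟨a, b, c, habc.1, habc.2.1, ha, hb, hc, huniq'⟩

variable {β : Type*} [Preorder β] {g : β → β} {e : β ↪o α}

theorem isOcc132_apply_iff (he : Semiconj e g f) {x y z : β} :
    IsOcc132 f (e x) (e y) (e z) ↔ IsOcc132 g x y z := by
  simp only [IsOcc132, ← he.eq, e.lt_iff_lt]

theorem containsOnce132_iff_of_forall_mem_range (he : Semiconj e g f)
    (hrange : ∀ x y z, IsOcc132 f x y z →
      x ∈ Set.range e ∧ y ∈ Set.range e ∧ z ∈ Set.range e) :
    ContainsOnce132 f ↔ ContainsOnce132 g := by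
  constructor
  · rintro ⟨⟨a, b, c⟩, habc, huniq⟩
    obtain ⟨⟨a, rfl⟩, ⟨b, rfl⟩, ⟨c, rfl⟩⟩ := hrange _ _ _ habc
    refine ⟨(a, b, c), (isOcc132_apply_iff he).1 habc, fun t ht ↦ ?_⟩
    simpa [Prod.ext_iff] using huniq (e t.1, e t.2.1, e t.2.2) ((isOcc132_apply_iff he).2 ht)
  · rintro ⟨⟨a, b, c⟩, habc, huniq⟩
    refine ⟨(e a, e b, e c), (isOcc132_apply_iff he).2 habc, ?_⟩
    rintro ⟨x, y, z⟩ hxyz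
    obtain ⟨⟨x, rfl⟩, ⟨y, rfl⟩, ⟨z, rfl⟩⟩ := hrange _ _ _ hxyz
    simpa [Prod.ext_iff] using huniq (x, y, z) ((isOcc132_apply_iff he).1 hxyz)

end Preorder

section LinearOrder

variable {α : Type*} [LinearOrder α] [OrderBot α] {f : α → α}

theorem ContainsOnce132.eq_swap_of_apply_bot_eq_bot {σ : Perm α} (h : ContainsOnce132 σ)
    (hσ : Involutive σ) (hbot : σ ⊥ = ⊥) : ∃ b c, ⊥ ⋖ b ∧ b ⋖ c ∧ σ = swap b c := by
  obtain ⟨a, b, c, hab, hbc, -, hb, hc, huniq⟩ := h.exists_fixed_lt_swapped hσ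
  have apply_pos {x : α} (hx : ⊥ < x) : ⊥ < σ x :=
    bot_lt_iff_ne_bot.2 fun hx' ↦ hx.ne' (σ.injective (hx'.trans hbot.symm))
  have inversion {x y : α} (hx : ⊥ < x) (hxy : x < y) (hyx : σ y < σ x) :
      ⊥ = a ∧ x = b ∧ y = c :=
    huniq _ _ _ ⟨hx, hxy, hbot.trans_lt (apply_pos (hx.trans hxy)), hyx⟩
  have hb_pos : ⊥ < b := bot_le.trans_lt hab
  obtain ⟨rfl, -, -⟩ := inversion hb_pos hbc (by rwa [hb, hc])
  have fixed {x : α} (hxb : x ≠ b) (hxc : x ≠ c) : σ x = x := by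
    rcases eq_bot_or_bot_lt x with rfl | hx
    · exact hbot
    rcases lt_trichotomy (σ x) x with hlt | heq | hgt
    · exact absurd (inversion (apply_pos hx) hlt (by rwa [hσ])).2.2 hxc
    · exact heq
    · exact absurd (inversion hx hgt (by rwa [hσ])).2.1 hxb
  refine ⟨b, c, ⟨hb_pos, fun x hx hxb ↦ ?_⟩, ⟨hbc, fun x hbx hxc ↦ ?_⟩, Equiv.ext fun x ↦ ?_⟩
  · have hx' := fixed hxb.ne (hxb.trans hbc).ne
    exact hx.ne' (huniq x b c ⟨hxb, hbc, by rwa [hx', hc], by rwa [hb, hc]⟩).1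
  · have hx' := fixed hbx.ne' hxc.ne
    exact hxc.ne (inversion hb_pos hbx (by rwa [hx', hb])).2.2
  · rw [swap_apply_def]
    split_ifs with hxb hxc
    · rw [hxb, hb]
    · rw [hxc, hc]
    · exact fixed hxb hxc

theorem ContainsOnce132.strictMonoOn_Ici_apply_bot (h : ContainsOnce132 f) (hf : Involutive f)
    (hbot : f ⊥ ≠ ⊥) : StrictMonoOn f (Set.Ici (f ⊥)) := by
  obtain ⟨a, b, c, -, -, ha, -, -, huniq⟩ := h.exists_fixed_lt_swapped hf
  intro x hx y _ hxy
  by_contra! hyx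
  have hlt : f y < f x := hyx.lt_of_ne (hf.injective.ne hxy.ne')
  have hx' : f ⊥ < x := lt_of_le_of_ne hx (by rintro rfl; simp [hf ⊥] at hlt)
  have hy' : ⊥ < f y :=
    bot_lt_iff_ne_bot.2 fun h0 ↦ (hx'.trans hxy).ne (by rw [← h0, hf])
  obtain ⟨rfl, -, -⟩ := huniq ⊥ (f y) (f x) ⟨hy', hlt, by rwa [hf], by rwa [hf, hf]⟩
  exact hbot ha

section Deletion

variable {β : Type*} [LinearOrder β] {g : β → β} {e : β ↪o α}
  (he : Semiconj e g f) (hrange : Set.range e = {⊥, f ⊥}ᶜ)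
include he hrange

theorem IsOcc132.mem_range_of_strictMonoOn (hf : Involutive f)
    (hg : StrictMonoOn g {x | f ⊥ < e x}) {x y z : α} (h : IsOcc132 f x y z) :
    x ∈ Set.range e ∧ y ∈ Set.range e ∧ z ∈ Set.range e := by
  obtain ⟨hxy, hyz, hxz', hzy'⟩ := h
  have mem_range {w : α} (hw : ⊥ < w) (hw' : ⊥ < f w) : w ∈ Set.range e := by
    rw [hrange]
    rintro (rfl | rfl)
    · exact hw.false
    · exact hw'.ne' (hf ⊥)
  have hz' := bot_le.trans_lt hxz'
  obtain ⟨y, rfl⟩ := mem_range (bot_le.trans_lt hxy) (hz'.trans hzy')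
  obtain ⟨z, rfl⟩ := mem_range (bot_le.trans_lt hyz) hz'
  refine ⟨?_, ⟨y, rfl⟩, ⟨z, rfl⟩⟩
  have hgi (w : β) : g (g w) = w := e.injective (by rw [he.eq, he.eq, hf])
  rw [e.lt_iff_lt] at hyz
  rw [← he.eq, ← he.eq, e.lt_iff_lt] at hzy'
  rw [← he.eq] at hxz'
  rw [hrange]
  rintro (rfl | rfl)
  · have hzy := hg hxz' (hxz'.trans (e.lt_iff_lt.2 hzy')) hzy'
    rw [hgi, hgi] at hzy
    exact hzy.asymm hyz
  · exact (hg hxy (hxy.trans (e.lt_iff_lt.2 hyz)) hyz).asymm hzy'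

theorem containsOnce132_iff_of_range_eq (hf : Involutive f) (hbot : f ⊥ ≠ ⊥) :
    ContainsOnce132 f ↔ ContainsOnce132 g ∧ StrictMonoOn g {x | f ⊥ < e x} := by
  have hmono (h : ContainsOnce132 f) : StrictMonoOn g {x | f ⊥ < e x} := by
    intro x hx y hy hxy
    rw [← e.lt_iff_lt, he.eq, he.eq]
    exact h.strictMonoOn_Ici_apply_bot hf hbot (le_of_lt hx) (le_of_lt hy) (e.lt_iff_lt.2 hxy)
  have hiff (hg : StrictMonoOn g {x | f ⊥ < e x}) : ContainsOnce132 f ↔ ContainsOnce132 g :=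
    containsOnce132_iff_of_forall_mem_range he fun _ _ _ ↦
      IsOcc132.mem_range_of_strictMonoOn he hrange hf hg
  exact ⟨fun h ↦ ⟨(hiff (hmono h)).1 h, hmono h⟩, fun ⟨h, hg⟩ ↦ (hiff hg).2 h⟩

end Deletion

end LinearOrder

theorem occ132_eq_one_iff {n : ℕ} {π : Perm (Fin n)} : occ132 π = 1 ↔ ContainsOnce132 π := by
  rw [occ132, Nat.card_eq_one_iff_unique, ← unique_iff_subsingleton_and_nonempty,
    unique_subtype_iff_existsUnique]
  rfl

section Insertion

variable {m : ℕ} (q : Fin (m + 1))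

/-- The increasing enumeration of the points of `Fin (m + 2)` other than `0` and `q + 1`. -/
def skipPair : Fin m ↪o Fin (m + 2) :=
  (Fin.succAboveOrderEmb q).trans (Fin.succOrderEmb _)

theorem range_skipPair : Set.range (skipPair q) = {0, q.succ}ᶜ := by
  change Set.range (Fin.succ ∘ q.succAbove) = _
  rw [Set.range_comp, Fin.range_succAbove]
  ext x
  cases x using Fin.cases <;> simp [eq_comm]

theorem eq_zero_or_eq_succ_or_exists_skipPair_eq (x : Fin (m + 2)) :
    x = 0 ∨ x = q.succ ∨ ∃ i, skipPair q i = x := by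
  by_cases hx : x ∈ Set.range (skipPair q)
  · exact Or.inr (Or.inr hx)
  · rw [range_skipPair, Set.mem_compl_iff, not_not] at hx
    exact hx.imp_right Or.inl

theorem succ_lt_skipPair_iff {i : Fin m} : q.succ < skipPair q i ↔ (q : ℕ) ≤ i := by
  change q.succ < (q.succAbove i).succ ↔ _
  rw [Fin.succ_lt_succ_iff, Fin.lt_succAbove_iff_le_castSucc]
  rfl

/-- The permutation of `Fin (m + 2)` that exchanges `0` and `q + 1` and acts as `σ`, transported
along the increasing bijection, on the other points. -/
noncomputable def insertTransposition (σ : Perm (Fin m)) : Perm (Fin (m + 2)) :=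
  swap 0 q.succ * σ.viaEmbedding (skipPair q).toEmbedding

variable {q}

theorem insertTransposition_zero (σ : Perm (Fin m)) : insertTransposition q σ 0 = q.succ := by
  rw [insertTransposition, Perm.mul_apply, Perm.viaEmbedding_apply_of_notMem, swap_apply_left]
  exact fun h ↦ (range_skipPair q ▸ h) (Or.inl rfl)

theorem insertTransposition_succ (σ : Perm (Fin m)) : insertTransposition q σ q.succ = 0 := by
  rw [insertTransposition, Perm.mul_apply, Perm.viaEmbedding_apply_of_notMem, swap_apply_right]
  exact fun h ↦ (range_skipPair q ▸ h) (Or.inr rfl)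

theorem semiconj_insertTransposition (σ : Perm (Fin m)) :
    Semiconj (skipPair q) σ (insertTransposition q σ) := by
  intro i
  have hσi : skipPair q (σ i) ∈ ({0, q.succ}ᶜ : Set _) := range_skipPair q ▸ ⟨σ i, rfl⟩
  simp only [Set.mem_compl_iff, Set.mem_insert_iff, Set.mem_singleton_iff, not_or] at hσi
  have happly := σ.viaEmbedding_apply (skipPair q).toEmbedding i
  rw [RelEmbedding.coe_toEmbedding] at happly
  rw [insertTransposition, Perm.mul_apply, happly, swap_apply_of_ne_of_ne hσi.1 hσi.2]

theorem insertTransposition_injective : Function.Injective (insertTransposition q) := fun _ _ h ↦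
  Perm.viaEmbeddingHom_injective _ (mul_left_cancel h)

theorem involutive_insertTransposition_iff {σ : Perm (Fin m)} :
    Involutive (insertTransposition q σ) ↔ Involutive σ := by
  have hσ := semiconj_insertTransposition (q := q) σ
  constructor
  · intro h i
    apply (skipPair q).injective
    rw [hσ.eq, hσ.eq, h]
  · intro h x
    obtain rfl | rfl | ⟨i, rfl⟩ := eq_zero_or_eq_succ_or_exists_skipPair_eq q x
    · rw [insertTransposition_zero, insertTransposition_succ]
    · rw [insertTransposition_succ, insertTransposition_zero]
    · rw [← hσ.eq, ← hσ.eq, h]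

theorem exists_insertTransposition_eq {π : Perm (Fin (m + 2))} (hπ : Involutive π)
    (h0 : π 0 = q.succ) : ∃ σ, insertTransposition q σ = π := by
  have hq : π q.succ = 0 := by rw [← h0, hπ]
  have hpres (i : Fin m) : π (skipPair q i) ∈ Set.range (skipPair q) := by
    have hi : skipPair q i ∈ Set.range (skipPair q) := ⟨i, rfl⟩
    rw [range_skipPair] at hi ⊢
    rintro (h | h)
    · exact hi (Or.inr (π.injective (h.trans hq.symm)))
    · exact hi (Or.inl (π.injective (h.trans h0.symm)))
  choose s hs using hpres
  have hs_inv : Involutive s := fun i ↦ (skipPair q).injective (by rw [hs, hs, hπ])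
  refine ⟨hs_inv.toPerm s, Equiv.ext fun x ↦ ?_⟩
  obtain rfl | rfl | ⟨i, rfl⟩ := eq_zero_or_eq_succ_or_exists_skipPair_eq q x
  · rw [insertTransposition_zero, h0]
  · rw [insertTransposition_succ, hq]
  · rw [← (semiconj_insertTransposition _).eq, Involutive.coe_toPerm, hs]

end Insertion

/-- The involutions of `Fin n` with exactly one occurrence of 132 whose restriction to the
positions `p, …, n - 1`, counted from zero, is increasing. -/
def onceInvolutions (n p : ℕ) : Set (Perm (Fin n)) :=
  {π | Involutive π ∧ ContainsOnce132 π ∧ StrictMonoOn π {x | p ≤ (x : ℕ)}}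

theorem onceInvolutions_mono {n p q : ℕ} (hpq : p ≤ q) :
    onceInvolutions n p ⊆ onceInvolutions n q :=
  fun _ ⟨hπ, honce, hmono⟩ ↦ ⟨hπ, honce, hmono.mono fun _ hx ↦ hpq.trans hx⟩

theorem onceInvolutions_eq_of_le {n p : ℕ} (hnp : n ≤ p + 1) :
    onceInvolutions n p = {π : Perm (Fin n) | Involutive π ∧ ContainsOnce132 π} := by
  ext π
  have hmono : StrictMonoOn π {x | p ≤ (x : ℕ)} := fun x hx y _ hxy ↦ by
    have : p ≤ (x : ℕ) := hx
    omega
  exact ⟨fun h ↦ ⟨h.1, h.2.1⟩, fun h ↦ ⟨h.1, h.2, hmono⟩⟩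

theorem iCountOnceTotal132_eq_ncard (n : ℕ) :
    iCountOnceTotal132 n = (onceInvolutions n n).ncard := by
  rw [iCountOnceTotal132, onceInvolutions_eq_of_le n.le_succ, ← Nat.card_coe_set_eq]
  simp only [occ132_eq_one_iff]
  rfl

theorem mem_onceInvolutions_iff_insertTransposition {m : ℕ} {q : Fin (m + 1)}
    {σ : Perm (Fin m)} :
    σ ∈ onceInvolutions m q ↔
      Involutive (insertTransposition q σ) ∧ ContainsOnce132 (insertTransposition q σ) := by
  rw [involutive_insertTransposition_iff]
  refine and_congr_right fun hσ ↦ ?_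
  have hbot : insertTransposition q σ ⊥ = q.succ := insertTransposition_zero σ
  have hrange : Set.range (skipPair q) = {⊥, insertTransposition q σ ⊥}ᶜ := by
    rw [hbot, range_skipPair, bot_eq_zero]
  rw [containsOnce132_iff_of_range_eq (semiconj_insertTransposition σ) hrange
    (involutive_insertTransposition_iff.2 hσ) (hbot ▸ Fin.succ_ne_zero q)]
  simp only [hbot, succ_lt_skipPair_iff]

theorem image_insertTransposition_onceInvolutions {m : ℕ} (q : Fin (m + 1)) :
    insertTransposition q '' onceInvolutions m q =
      {π : Perm (Fin (m + 2)) | Involutive π ∧ ContainsOnce132 π ∧ π 0 = q.succ} := by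
  ext π
  constructor
  · rintro ⟨σ, hσ, rfl⟩
    rw [mem_onceInvolutions_iff_insertTransposition] at hσ
    exact ⟨hσ.1, hσ.2, insertTransposition_zero σ⟩
  · rintro ⟨hπ, honce, h0⟩
    obtain ⟨σ, rfl⟩ := exists_insertTransposition_eq hπ h0
    exact ⟨σ, mem_onceInvolutions_iff_insertTransposition.2 ⟨hπ, honce⟩, rfl⟩

section FirstEntry

variable {n p : ℕ} {π : Perm (Fin (n + 3))}

theorem ContainsOnce132.eq_swap_one_two (h : ContainsOnce132 π) (hπ : Involutive π)
    (h0 : π 0 = 0) : π = swap 1 2 := by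
  obtain ⟨b, c, hb, hc, rfl⟩ := h.eq_swap_of_apply_bot_eq_bot hπ h0
  rw [Fin.covBy_iff, Nat.covBy_iff_add_one_eq] at hb hc
  have hb' : b = 1 := Fin.ext hb.symm
  have hc' : c = 2 := Fin.ext (by rw [← hc, hb']; rfl)
  rw [hb', hc']

theorem val_swap_one_two (x : Fin (n + 3)) :
    ((swap 1 2 : Perm (Fin (n + 3))) x : ℕ) =
      if (x : ℕ) = 1 then 2 else if (x : ℕ) = 2 then 1 else (x : ℕ) := by
  have h1 : x = 1 ↔ (x : ℕ) = 1 := Fin.ext_iff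
  have h2 : x = 2 ↔ (x : ℕ) = 2 := Fin.ext_iff
  simp only [swap_apply_def, h1, h2, apply_ite Fin.val]
  rfl

theorem swap_one_two_mem_onceInvolutions : swap 1 2 ∈ onceInvolutions (n + 3) 2 := by
  have val_zero : ((0 : Fin (n + 3)) : ℕ) = 0 := rfl
  have val_one : ((1 : Fin (n + 3)) : ℕ) = 1 := rfl
  have val_two : ((2 : Fin (n + 3)) : ℕ) = 2 := rfl
  refine ⟨swap_apply_self 1 2, ⟨(0, 1, 2), ?_, ?_⟩, fun x hx y _ hxy ↦ ?_⟩
  · simp only [IsOcc132, Fin.lt_def, val_swap_one_two, val_zero, val_one, val_two]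
    decide
  · rintro ⟨x, y, z⟩
    simp only [IsOcc132, Fin.lt_def, val_swap_one_two, Prod.mk.injEq, Fin.ext_iff, val_zero,
      val_one, val_two]
    grind
  · have hx' : 2 ≤ (x : ℕ) := hx
    simp only [Fin.lt_def, val_swap_one_two] at hxy ⊢
    grind

theorem mem_onceInvolutions_iff_apply_zero_le (hp : 2 ≤ p) :
    π ∈ onceInvolutions (n + 3) p ↔ Involutive π ∧ ContainsOnce132 π ∧ (π 0 : ℕ) ≤ p := by
  refine and_congr_right fun hπ ↦ and_congr_right fun honce ↦ ⟨fun hmono ↦ ?_, fun hle ↦ ?_⟩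
  · by_contra! hlt
    have hp' : p < n + 3 := hlt.trans (π 0).isLt
    have hmem : ⟨p, hp'⟩ ∈ {x : Fin (n + 3) | p ≤ (x : ℕ)} := le_refl p
    have hlt' : π ⟨p, hp'⟩ < π (π 0) := hmono hmem hlt.le hlt
    rw [hπ] at hlt'
    exact (Fin.zero_le _).not_gt hlt'
  · by_cases h0 : π 0 = 0
    · rw [honce.eq_swap_one_two hπ h0]
      exact (onceInvolutions_mono hp swap_one_two_mem_onceInvolutions).2.2
    · exact (honce.strictMonoOn_Ici_apply_bot hπ h0).mono fun x hx ↦ hle.trans hx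

theorem onceInvolutions_two : onceInvolutions (n + 3) 2 = {swap 1 2} := by
  refine Set.eq_singleton_iff_unique_mem.2 ⟨swap_one_two_mem_onceInvolutions, ?_⟩
  rintro π ⟨hπ, honce, hmono⟩
  obtain ⟨a, b, c, hab, hbc, ha, hb, hc, -⟩ := honce.exists_fixed_lt_swapped hπ
  have hb2 : (b : ℕ) < 2 := by
    by_contra! h2
    have := hmono h2 (h2.trans hbc.le) hbc
    rw [hb, hc] at this
    exact this.asymm hbc
  have ha0 : a = 0 := Fin.ext (Nat.lt_one_iff.1 (by omega))
  exact honce.eq_swap_one_two hπ (ha0 ▸ ha)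

end FirstEntry

theorem ncard_onceInvolutions_succ {n p : ℕ} (hp : 2 ≤ p) (hpn : p ≤ n + 1) :
    (onceInvolutions (n + 3) (p + 1)).ncard =
      (onceInvolutions (n + 3) p).ncard + (onceInvolutions (n + 1) p).ncard := by
  let q : Fin (n + 2) := ⟨p, by omega⟩
  have hq (π : Perm (Fin (n + 3))) : π 0 = q.succ ↔ (π 0 : ℕ) = p + 1 := Fin.ext_iff
  have hunion : onceInvolutions (n + 3) (p + 1) =
      onceInvolutions (n + 3) p ∪ insertTransposition q '' onceInvolutions (n + 1) q := by
    ext π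
    rw [image_insertTransposition_onceInvolutions, Set.mem_union,
      mem_onceInvolutions_iff_apply_zero_le hp, mem_onceInvolutions_iff_apply_zero_le (by omega),
      Set.mem_ofPred_eq, hq, Nat.le_succ_iff]
    tauto
  have hdisj : Disjoint (onceInvolutions (n + 3) p)
      (insertTransposition q '' onceInvolutions (n + 1) q) := by
    rw [image_insertTransposition_onceInvolutions, Set.disjoint_left]
    rintro π hπ ⟨-, -, h0⟩
    have := ((mem_onceInvolutions_iff_apply_zero_le hp).1 hπ).2.2
    rw [hq] at h0
    omega
  rw [hunion, Set.ncard_union_eq hdisj,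
    Set.ncard_image_of_injective _ insertTransposition_injective]

/-- For `l = 0` the truncated bound `l - 1` is `0`, which only drops a zero term of the sum. -/
theorem sum_Ico_choose_succ (s : ℕ) {l u : ℕ} (hlu : l ≤ u) :
    ∑ j ∈ Finset.Ico l (u + 1), (s + 1).choose j =
      ∑ j ∈ Finset.Ico (l - 1) (u + 1), s.choose j + ∑ j ∈ Finset.Ico l u, s.choose j := by
  induction u, hlu using Nat.le_induction with
  | base => cases l <;> simp [Finset.sum_Ico_succ_top, Nat.choose_succ_succ]
  | succ u hlu ih =>
    rw [Finset.sum_Ico_succ_top (by omega), ih, Finset.sum_Ico_succ_top (b := u + 1) (by omega),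
      Finset.sum_Ico_succ_top hlu, Nat.choose_succ_succ]
    ring

theorem ContainsOnce132.two_lt {n : ℕ} {f : Fin n → Fin n} (h : ContainsOnce132 f) : 2 < n := by
  obtain ⟨⟨a, b, c⟩, ⟨hab, hbc, -⟩, -⟩ := h
  dsimp only at hab hbc
  omega

theorem ncard_onceInvolutions_two {n : ℕ} (hn : 2 ≤ n) :
    (onceInvolutions n 2).ncard =
      ∑ j ∈ Finset.Ico (2 - (n + 1) / 2) (n / 2 + 1), Nat.choose 0 j := by
  obtain rfl | hn' := hn.eq_or_lt
  · have : onceInvolutions 2 2 = ∅ :=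
      Set.eq_empty_of_forall_notMem fun π hπ ↦ hπ.2.1.two_lt.false
    simp [this]
  · obtain ⟨m, rfl⟩ := Nat.exists_eq_add_of_le' hn'
    have hlower : 2 - (m + 3 + 1) / 2 = 0 := by omega
    rw [onceInvolutions_two, Set.ncard_singleton, hlower, Finset.sum_eq_single 0]
    · rfl
    · exact fun j _ hj ↦ Nat.choose_eq_zero_of_lt (Nat.pos_of_ne_zero hj)
    · simp

theorem ncard_onceInvolutions {n s : ℕ} (hsn : s + 2 ≤ n) :
    (onceInvolutions n (s + 2)).ncard =
      ∑ j ∈ Finset.Ico (s + 2 - (n + 1) / 2) (n / 2 + 1), s.choose j := by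
  induction s generalizing n with
  | zero => exact ncard_onceInvolutions_two hsn
  | succ s ih =>
    have hlower : s + 2 - (n + 1) / 2 = s + 1 + 2 - (n + 1) / 2 - 1 := by omega
    rw [sum_Ico_choose_succ s (by omega), ← hlower, ← ih (by omega)]
    obtain rfl | hsn' := hsn.eq_or_lt
    · have hempty : (s + 1 + 2) / 2 ≤ s + 1 + 2 - (s + 1 + 2 + 1) / 2 := by omega
      rw [Finset.Ico_eq_empty_of_le hempty, Finset.sum_empty, add_zero,
        onceInvolutions_eq_of_le (by omega), onceInvolutions_eq_of_le (by omega)]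
    · obtain ⟨m, rfl⟩ := Nat.exists_eq_add_of_le' (show 3 ≤ n by omega)
      have hlower' : s + 1 + 2 - (m + 3 + 1) / 2 = s + 2 - (m + 1 + 1) / 2 := by omega
      have hupper : (m + 3) / 2 = (m + 1) / 2 + 1 := by omega
      rw [hlower', hupper, ← ih (by omega), ← ncard_onceInvolutions_succ (by omega) (by omega)]

/-- For every `n ≥ 3`, `i_n(∅;132) = C(n-2, ⌊(n-3)/2⌋)`. -/
theorem statement14 (n : ℕ) (hn : 3 ≤ n) :
    iCountOnceTotal132 n = (n - 2).choose ((n - 3) / 2) := by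
  obtain ⟨s, rfl⟩ := Nat.exists_eq_add_of_le' (show 2 ≤ n by omega)
  have hsingle : s + 2 - (s + 2 + 1) / 2 = (s + 2) / 2 := by omega
  rw [iCountOnceTotal132_eq_ncard, ncard_onceInvolutions le_rfl, hsingle, Nat.Ico_succ_singleton,
    Finset.sum_singleton, Nat.add_sub_cancel]
  exact Nat.choose_symm_of_eq_add (by omega)
end
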